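/- arXiv:2303.04555 — 2 statements merged into one kernel-verified Lean document; each statement's English description precedes it below -/
import Mathlib

section
/- Suppose v_0 = v*, n = 2^L ≥ 2 is a power of two, and η ≤ 0.1 / max_{i∈[n]} ‖y_i‖₂². Then under Oja's update rule, η ∑_{i=1}^{n} ⟨y_i, P v̂_{i−1}⟩² ≤ 100 · α² · L² · log ‖v_n‖₂, where L = log₂ n. -/
open RealInnerProductSpace

lemma oja_dual {E : Type*} [NormedAddCommGroup E] [InnerProductSpace ℝ E] (β : ℝ) (hβ : 0 ≤ β)
    (N : ℕ) (z : ℕ → E) (c : ℕ → ℝ)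
    (hz : ∀ w : E, ∑ i ∈ Finset.range N, ⟪z i, w⟫ ^ 2 ≤ β * ‖w‖ ^ 2) :
    ‖∑ i ∈ Finset.range N, c i • z i‖ ^ 2 ≤ β * ∑ i ∈ Finset.range N, c i ^ 2 := by
  set u := ∑ i ∈ Finset.range N, c i • z i with hu
  have h1 : ‖u‖ ^ 2 = ∑ i ∈ Finset.range N, c i * ⟪z i, u⟫ := by
    rw [← real_inner_self_eq_norm_sq]
    conv_lhs => rw [hu, sum_inner]
    simp only [real_inner_smul_left, ← hu]
  have h2 := Finset.sum_mul_sq_le_sq_mul_sq (Finset.range N) c (fun i => ⟪z i, u⟫)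
  rw [← h1] at h2
  have h3 := hz u
  have hc : 0 ≤ ∑ i ∈ Finset.range N, c i ^ 2 := Finset.sum_nonneg fun i _ => sq_nonneg _
  have h4 : (‖u‖ ^ 2) ^ 2 ≤ (∑ i ∈ Finset.range N, c i ^ 2) * (β * ‖u‖ ^ 2) :=
    h2.trans (mul_le_mul_of_nonneg_left h3 hc)
  rcases (sq_nonneg ‖u‖).eq_or_lt with h | h
  · rw [← h]; positivity
  · refine le_of_mul_le_mul_right ?_ h
    nlinarith

lemma oja_dyadic {E : Type*} [NormedAddCommGroup E] [InnerProductSpace ℝ E] (β : ℝ) (hβ : 0 ≤ β)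
    (L : ℕ) : ∀ (z : ℕ → E) (c r : ℕ → ℝ),
    (∀ w : E, ∑ i ∈ Finset.range (2 ^ L), ⟪z i, w⟫ ^ 2 ≤ β * ‖w‖ ^ 2) →
    (∀ i, 0 ≤ r i) → (∀ i j, i ≤ j → j < 2 ^ L → r j ≤ r i) →
    ∑ k ∈ Finset.range (2 ^ L), r k * ⟪z k, ∑ i ∈ Finset.range k, c i • z i⟫ ^ 2 ≤
      β ^ 2 * ((L : ℝ) + 1) ^ 2 * ∑ k ∈ Finset.range (2 ^ L), r k * c k ^ 2 := by
  induction L with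
  | zero =>
    intro z c r hz hr hanti
    simp
    have := hr 0
    positivity
  | succ L ih =>
    intro z c r hz hr hanti
    set N := 2 ^ L with hN
    have hNN : 2 ^ (L + 1) = N + N := by rw [hN]; ring
    rw [hNN] at hz hanti ⊢
    have hNpos : 0 < N := by positivity
    have hzA : ∀ w : E, ∑ i ∈ Finset.range N, ⟪z i, w⟫ ^ 2 ≤ β * ‖w‖ ^ 2 := by
      intro w
      have := hz w
      rw [Finset.sum_range_add] at this
      have h0 : 0 ≤ ∑ x ∈ Finset.range N, ⟪z (N + x), w⟫ ^ 2 :=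
        Finset.sum_nonneg fun i _ => sq_nonneg _
      linarith
    have hzB : ∀ w : E, ∑ i ∈ Finset.range N, ⟪z (N + i), w⟫ ^ 2 ≤ β * ‖w‖ ^ 2 := by
      intro w
      have := hz w
      rw [Finset.sum_range_add] at this
      have h0 : 0 ≤ ∑ x ∈ Finset.range N, ⟪z x, w⟫ ^ 2 :=
        Finset.sum_nonneg fun i _ => sq_nonneg _
      linarith
    have hA := ih z c r hzA hr (fun i j hij hj => hanti i j hij (by omega))
    have hB := ih (fun i => z (N + i)) (fun i => c (N + i)) (fun i => r (N + i)) hzB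
      (fun i => hr _) (fun i j hij hj => hanti _ _ (by omega) (by omega))
    set U := ∑ i ∈ Finset.range N, c i • z i with hU
    have hdual := oja_dual β hβ N z c hzA
    rw [← hU] at hdual
    have hY : ∑ k ∈ Finset.range N, r (N + k) * ⟪z (N + k), U⟫ ^ 2 ≤
        β ^ 2 * ∑ k ∈ Finset.range N, r k * c k ^ 2 := by
      calc ∑ k ∈ Finset.range N, r (N + k) * ⟪z (N + k), U⟫ ^ 2
          ≤ ∑ k ∈ Finset.range N, r N * ⟪z (N + k), U⟫ ^ 2 := by
            refine Finset.sum_le_sum fun k hk => ?_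
            have := Finset.mem_range.mp hk
            exact mul_le_mul_of_nonneg_right (hanti _ _ (by omega) (by omega)) (sq_nonneg _)
        _ = r N * ∑ k ∈ Finset.range N, ⟪z (N + k), U⟫ ^ 2 := by rw [Finset.mul_sum]
        _ ≤ r N * (β * (β * ∑ k ∈ Finset.range N, c k ^ 2)) :=
            mul_le_mul_of_nonneg_left ((hzB U).trans
              (mul_le_mul_of_nonneg_left hdual hβ)) (hr N)
        _ = β ^ 2 * ∑ k ∈ Finset.range N, r N * c k ^ 2 := by rw [← Finset.mul_sum]; ring
        _ ≤ _ := by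
            refine mul_le_mul_of_nonneg_left (Finset.sum_le_sum fun k hk => ?_) (sq_nonneg _)
            have := Finset.mem_range.mp hk
            exact mul_le_mul_of_nonneg_right (hanti _ _ (by omega) (by omega)) (sq_nonneg _)
    rw [Finset.sum_range_add, Finset.sum_range_add _ N N]
    set a := ∑ k ∈ Finset.range N, r k * c k ^ 2 with ha
    set b := ∑ k ∈ Finset.range N, r (N + k) * c (N + k) ^ 2 with hb
    have ha0 : 0 ≤ a := Finset.sum_nonneg fun i _ => mul_nonneg (hr _) (sq_nonneg _)
    have hb0 : 0 ≤ b := Finset.sum_nonneg fun i _ => mul_nonneg (hr _) (sq_nonneg _)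
    set l : ℝ := (L : ℝ) + 1 with hl
    have hl0 : 0 < l := by positivity
    have hsplit : ∑ k ∈ Finset.range N,
        r (N + k) * ⟪z (N + k), ∑ i ∈ Finset.range (N + k), c i • z i⟫ ^ 2 ≤
        (1 + 1 / l) * (∑ k ∈ Finset.range N, r (N + k) *
          ⟪z (N + k), ∑ i ∈ Finset.range k, c (N + i) • z (N + i)⟫ ^ 2) +
        (1 + l) * ∑ k ∈ Finset.range N, r (N + k) * ⟪z (N + k), U⟫ ^ 2 := by
      rw [Finset.mul_sum, Finset.mul_sum, ← Finset.sum_add_distrib]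
      refine Finset.sum_le_sum fun k hk => ?_
      rw [Finset.sum_range_add, inner_add_right, ← hU]
      set X := ⟪z (N + k), ∑ i ∈ Finset.range k, c (N + i) • z (N + i)⟫
      set Y := ⟪z (N + k), U⟫
      have key : (Y + X) ^ 2 ≤ (1 + 1 / l) * X ^ 2 + (1 + l) * Y ^ 2 := by
        have : (1 + 1 / l) * X ^ 2 + (1 + l) * Y ^ 2 - (Y + X) ^ 2 = (X - l * Y) ^ 2 / l := by
          field_simp; ring
        have h2 : 0 ≤ (X - l * Y) ^ 2 / l := by positivity
        linarith
      have := mul_le_mul_of_nonneg_left key (hr (N + k))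
      linarith
    have e1 := mul_le_mul_of_nonneg_left hB (show 0 ≤ 1 + 1 / l by positivity)
    have e2 := mul_le_mul_of_nonneg_left hY (show 0 ≤ 1 + l by positivity)
    have e3 : (1 + 1 / l) * (β ^ 2 * l ^ 2 * b) = β ^ 2 * (l ^ 2 + l) * b := by
      field_simp
    have e4 : ((L + 1 : ℕ) : ℝ) + 1 = l + 1 := by push_cast; rw [hl]
    rw [e4]
    have p1 : 0 ≤ β ^ 2 * (l + 1) * b := by positivity
    have p2 : 0 ≤ β ^ 2 * l * a := by positivity
    rw [e3] at e1
    nlinarith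

theorem stmt_13 {n d L : ℕ} (hd : 1 ≤ d) (hL : 1 ≤ L) (hn : n = 2 ^ L)
    (y : ℕ → EuclideanSpace ℝ (Fin d)) (η : ℝ) (hη : 0 < η)
    (hη' : η ≤ 0.1 / ((Finset.Icc 1 n).sup'
      (Finset.nonempty_Icc.mpr (by rw [hn]; exact Nat.one_le_two_pow : 1 ≤ n)) fun i => ‖y i‖ ^ 2))
    (vstar : EuclideanSpace ℝ (Fin d)) (hvstar : ‖vstar‖ = 1)
    (α : ℝ) (hα : 0 < α)
    (halpha : ∀ w : EuclideanSpace ℝ (Fin d), ‖w‖ ≤ 1 → ⟪w, vstar⟫ = 0 →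
      η * ∑ i ∈ Finset.Icc 1 n, ⟪w, y i⟫ ^ 2 ≤ α)
    (P : EuclideanSpace ℝ (Fin d) → EuclideanSpace ℝ (Fin d))
    (hP : ∀ x, P x = x - ⟪vstar, x⟫ • vstar)
    (v : ℕ → EuclideanSpace ℝ (Fin d)) (hv0 : v 0 = vstar)
    (hv : ∀ i, 1 ≤ i → i ≤ n → v i = v (i - 1) + (η * ⟪y i, v (i - 1)⟫) • y i) :
    η * ∑ i ∈ Finset.Icc 1 n, ⟪y i, P (‖v (i - 1)‖⁻¹ • v (i - 1))⟫ ^ 2 ≤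
      100 * α ^ 2 * (L : ℝ) ^ 2 * Real.log ‖v n‖ := by
  have hreidx : ∀ f : ℕ → ℝ, ∑ i ∈ Finset.Icc 1 n, f i = ∑ i ∈ Finset.range n, f (i + 1) := by
    intro f
    rw [Finset.range_eq_Ico, Finset.sum_Ico_add' f 0 n 1]
    rfl
  have hbd : ∀ i < n, η * ‖y (i + 1)‖ ^ 2 ≤ 0.1 := by
    intro i hi
    have hle := Finset.le_sup' (fun i => ‖y i‖ ^ 2)
      (show i + 1 ∈ Finset.Icc 1 n from Finset.mem_Icc.mpr ⟨by omega, by omega⟩)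
    set M := (Finset.Icc 1 n).sup'
      (Finset.nonempty_Icc.mpr (by rw [hn]; exact Nat.one_le_two_pow : 1 ≤ n)) fun i => ‖y i‖ ^ 2
    have hM0 : 0 ≤ M := (sq_nonneg _).trans hle
    rcases hM0.eq_or_lt with h | h
    · rw [← h] at hη'; simp at hη'; linarith
    · rw [le_div_iff₀ h] at hη'
      exact (mul_le_mul_of_nonneg_left hle hη.le).trans hη'
  have hvs : ∀ i < n, v (i + 1) = v i + (η * ⟪y (i + 1), v i⟫) • y (i + 1) := by
    intro i hi
    simpa using hv (i + 1) (by omega) (by omega)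
  -- symmetric idempotent
  have hPP : ∀ x w, ⟪x, P w⟫ = ⟪P x, w⟫ := by
    intro x w
    simp only [hP, inner_sub_left, inner_sub_right, real_inner_smul_left, real_inner_smul_right,
      real_inner_comm vstar x]
    ring
  have hss : ⟪vstar, vstar⟫ = 1 := by rw [real_inner_self_eq_norm_sq, hvstar]; norm_num
  have hPperp : ∀ x, ⟪P x, vstar⟫ = 0 := by
    intro x
    rw [hP, inner_sub_left, real_inner_smul_left, hss, real_inner_comm]; ring
  have hPid : ∀ x, P (P x) = P x := by
    intro x
    conv_lhs => rw [hP]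
    rw [real_inner_comm, hPperp]; simp
  have hPnorm : ∀ x, ‖P x‖ ≤ ‖x‖ := by
    intro x
    have h1 : ‖P x‖ ^ 2 = ⟪P x, x⟫ := by
      rw [← real_inner_self_eq_norm_sq, hPP, hPid]
    have h2 := real_inner_le_norm (P x) x
    by_contra! h
    have : 0 < ‖P x‖ := (norm_nonneg _).trans_lt h
    nlinarith
  have hPadd : ∀ x w, P (x + w) = P x + P w := by
    intro x w
    simp only [hP, inner_add_right, add_smul]; abel
  have hPsmul : ∀ (t : ℝ) x, P (t • x) = t • P x := by
    intro t x
    simp only [hP, real_inner_smul_right, smul_sub, smul_smul]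
  set z : ℕ → EuclideanSpace ℝ (Fin d) := fun i => P (y (i + 1)) with hzdef
  set c : ℕ → ℝ := fun i => ⟪y (i + 1), v i⟫ with hc
  have hz : ∀ w, ∑ i ∈ Finset.range n, ⟪z i, w⟫ ^ 2 ≤ α / η * ‖w‖ ^ 2 := by
    intro w
    rcases eq_or_ne w 0 with rfl | hw
    · simp
    have hw' : 0 < ‖w‖ := norm_pos_iff.mpr hw
    have h := halpha (P (‖w‖⁻¹ • w)) (by
      refine (hPnorm _).trans ?_
      rw [norm_smul, norm_inv, norm_norm, inv_mul_cancel₀ hw'.ne']) (hPperp _)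
    rw [hreidx] at h
    have h2 : ∀ i, ⟪P (‖w‖⁻¹ • w), y (i + 1)⟫ ^ 2 = (‖w‖ ^ 2)⁻¹ * ⟪z i, w⟫ ^ 2 := by
      intro i
      rw [← hPP, real_inner_smul_left, real_inner_comm, mul_pow, inv_pow]
    simp only [h2] at h
    rw [← Finset.mul_sum] at h
    have hw2 : 0 < ‖w‖ ^ 2 := by positivity
    rw [div_mul_eq_mul_div, le_div_iff₀ hη]
    have := mul_le_mul_of_nonneg_right h hw2.le
    calc _ = η * ((‖w‖ ^ 2)⁻¹ * ∑ i ∈ Finset.range n, ⟪z i, w⟫ ^ 2) * ‖w‖ ^ 2 := by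
          field_simp
      _ ≤ _ := this
  have hstep : ∀ i < n, ‖v (i + 1)‖ ^ 2 =
      ‖v i‖ ^ 2 + 2 * (η * c i ^ 2) + (η * c i ^ 2) * (η * ‖y (i + 1)‖ ^ 2) := by
    intro i hi
    rw [hvs i hi, norm_add_sq_real, real_inner_smul_right, norm_smul, real_inner_comm (y (i + 1)) (v i), mul_pow,
      Real.norm_eq_abs, sq_abs]
    simp only [hc]; ring
  have hmono1 : ∀ i < n, ‖v i‖ ≤ ‖v (i + 1)‖ := by
    intro i hi
    have := hstep i hi
    refine le_of_sq_le_sq ?_ (norm_nonneg _)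
    have : 0 ≤ 2 * (η * c i ^ 2) + (η * c i ^ 2) * (η * ‖y (i + 1)‖ ^ 2) := by positivity
    linarith
  have hmono : ∀ i j, i ≤ j → j ≤ n → ‖v i‖ ≤ ‖v j‖ := by
    intro i j hij
    induction j, hij using Nat.le_induction with
    | base => intro _; rfl
    | succ j hij ih => intro h; exact (ih (by omega)).trans (hmono1 j (by omega))
  have hge1 : ∀ i ≤ n, 1 ≤ ‖v i‖ := by
    intro i hi
    have := hmono 0 i (by omega) hi
    rwa [hv0, hvstar] at this
  have hPv : ∀ j ≤ n, P (v j) = η • ∑ i ∈ Finset.range j, c i • z i := by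
    intro j
    induction j with
    | zero => intro _; rw [hv0, hP, hss]; simp
    | succ j ih =>
      intro h
      rw [hvs j (by omega), hPadd, hPsmul, ih (by omega), Finset.sum_range_succ, smul_add,
        smul_smul]
  set r : ℕ → ℝ := fun i => (‖v i‖⁻¹) ^ 2 with hr
  have hmain := oja_dyadic (α / η) (by positivity) L z c r (by rw [← hn]; exact hz)
    (fun i => sq_nonneg _) (by
      intro i j hij hj
      have h1 := hmono i j hij (by omega)
      have h2 := hge1 i (by omega)
      have h3 : 0 < ‖v i‖ := by linarith
      simp only [hr]
      gcongr)
  rw [← hn] at hmain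
  have hlog : ∀ i < n, η * (r i * c i ^ 2) ≤ 2 * (Real.log ‖v (i + 1)‖ - Real.log ‖v i‖) := by
    intro i hi
    have g1 := hge1 i hi.le
    have g2 := hge1 (i + 1) hi
    have h0 : 0 < ‖v i‖ := by linarith
    have h0' : 0 < ‖v (i + 1)‖ := by linarith
    set a := η * (r i * c i ^ 2) with ha
    have ha0 : 0 ≤ a := by positivity
    have hea : η * c i ^ 2 = a * ‖v i‖ ^ 2 := by
      simp only [ha, hr]; field_simp
    have ha1 : a ≤ 0.1 := by
      have hcs : c i ^ 2 ≤ ‖y (i + 1)‖ ^ 2 * ‖v i‖ ^ 2 := by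
        rw [← mul_pow, ← sq_abs]
        exact pow_le_pow_left₀ (abs_nonneg _) (abs_real_inner_le_norm _ _) 2
      have h1 := mul_le_mul_of_nonneg_left hcs hη.le
      rw [hea, ← mul_assoc] at h1
      exact (le_of_mul_le_mul_right h1 (by positivity)).trans (hbd i hi)
    have hs : (1 + 2 * a) * ‖v i‖ ^ 2 ≤ ‖v (i + 1)‖ ^ 2 := by
      rw [hstep i hi, hea]
      have : 0 ≤ a * ‖v i‖ ^ 2 * (η * ‖y (i + 1)‖ ^ 2) := by positivity
      linarith
    have hl := Real.log_le_log (by positivity) hs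
    rw [Real.log_mul (by positivity) (by positivity), Real.log_pow, Real.log_pow] at hl
    have hl2 := Real.one_sub_inv_le_log_of_pos (show 0 < 1 + 2 * a by positivity)
    have hl3 : a ≤ 1 - (1 + 2 * a)⁻¹ := by
      have : 1 - (1 + 2 * a)⁻¹ - a = a * (1 - 2 * a) / (1 + 2 * a) := by
        field_simp; ring
      have h2 : 0 ≤ a * (1 - 2 * a) / (1 + 2 * a) := by
        apply div_nonneg (mul_nonneg ha0 (by linarith)) (by positivity)
      linarith
    push_cast at hl
    linarith
  have hsum : η * ∑ i ∈ Finset.range n, r i * c i ^ 2 ≤ 2 * Real.log ‖v n‖ := by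
    rw [Finset.mul_sum]
    refine (Finset.sum_le_sum fun i hi => hlog i (Finset.mem_range.mp hi)).trans ?_
    rw [← Finset.mul_sum, Finset.sum_range_sub (fun i => Real.log ‖v i‖), hv0, hvstar]
    simp
  have hlhs : η * ∑ i ∈ Finset.Icc 1 n, ⟪y i, P (‖v (i - 1)‖⁻¹ • v (i - 1))⟫ ^ 2 =
      η ^ 3 * ∑ k ∈ Finset.range n, r k * ⟪z k, ∑ i ∈ Finset.range k, c i • z i⟫ ^ 2 := by
    rw [hreidx, Finset.mul_sum, Finset.mul_sum]
    refine Finset.sum_congr rfl fun k hk => ?_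
    have hk' := Finset.mem_range.mp hk
    rw [Nat.add_sub_cancel, ← hPid, hPP, hPsmul, hPv k hk'.le, real_inner_smul_right,
      real_inner_smul_right]
    simp only [hr, hzdef]
    ring
  rw [hlhs]
  have hL1 : (1 : ℝ) ≤ L := by exact_mod_cast hL
  have hlog0 : 0 ≤ Real.log ‖v n‖ := Real.log_nonneg (hge1 n le_rfl)
  calc _ ≤ η ^ 3 * ((α / η) ^ 2 * ((L : ℝ) + 1) ^ 2 * ∑ k ∈ Finset.range n, r k * c k ^ 2) :=
        mul_le_mul_of_nonneg_left hmain (by positivity)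
    _ = α ^ 2 * ((L : ℝ) + 1) ^ 2 * (η * ∑ k ∈ Finset.range n, r k * c k ^ 2) := by
        field_simp
    _ ≤ α ^ 2 * ((L : ℝ) + 1) ^ 2 * (2 * Real.log ‖v n‖) :=
        mul_le_mul_of_nonneg_left hsum (by positivity)
    _ = (2 * ((L : ℝ) + 1) ^ 2) * (α ^ 2 * Real.log ‖v n‖) := by ring
    _ ≤ (100 * (L : ℝ) ^ 2) * (α ^ 2 * Real.log ‖v n‖) :=
        mul_le_mul_of_nonneg_right (by nlinarith) (by positivity)
    _ = _ := by ring
end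

section
/- (The right direction grows.) Let C₁ ≥ 200 be a fixed constant, let α ∈ (0, 0.1), suppose v_0 = v*, n = 2^L ≥ 2 is a power of two with L = log₂ n, and η ≤ 0.1 / max_{i∈[n]} ‖y_i‖₂². Then under Oja's update rule, log ‖v_n‖₂ ≥ (β/8) / (1 + C₁ · α² · L²). Moreover, if in addition α < 1/(10 · C₁ · L), then ‖v_n‖₂ ≥ exp(β/20). -/
open RealInnerProductSpace

section aux
variable {E : Type*} [NormedAddCommGroup E] [InnerProductSpace ℝ E]

def ojaP (u x : E) : E := x - ⟪u, x⟫ • u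

theorem ojaP_sub (u x x' : E) : ojaP u (x - x') = ojaP u x - ojaP u x' := by
  simp only [ojaP, inner_sub_right, sub_smul]; abel

theorem ojaP_orth (u x : E) (hu : ‖u‖ = 1) : ⟪ojaP u x, u⟫ = 0 := by
  simp [ojaP, inner_sub_left, inner_smul_left, hu, real_inner_comm]

theorem ojaP_inner (u x : E) (hu : ‖u‖ = 1) : ⟪ojaP u x, x⟫ = ‖ojaP u x‖ ^ 2 := by
  have h := ojaP_orth u x hu
  rw [← real_inner_self_eq_norm_sq]
  conv_rhs => rw [ojaP.eq_1 u x, inner_sub_right]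
  rw [← ojaP.eq_1 u x, inner_smul_right, h]; simp

theorem oja_tele (z v : ℕ → E) (η : ℝ) (n : ℕ)
    (hv : ∀ i, i < n → v (i+1) = v i + (η * ⟪z i, v i⟫) • z i) (w : E) (s m : ℕ) (hsm : s ≤ m)
    (hm : m ≤ n) : ⟪w, v m - v s⟫ = ∑ i ∈ Finset.Ico s m, η * ⟪z i, v i⟫ * ⟪w, z i⟫ := by
  induction m, hsm using Nat.le_induction with
  | base => simp
  | succ m h ih =>
    rw [Finset.sum_Ico_succ_top h, ← ih (by omega), hv m (by omega)]
    simp only [inner_sub_right, inner_add_right, inner_smul_right]; ring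

theorem oja_left (z v : ℕ → E) (η : ℝ) (hη : 0 < η) (n : ℕ)
    (hv : ∀ i, i < n → v (i+1) = v i + (η * ⟪z i, v i⟫) • z i) (u : E) (hu : ‖u‖ = 1) (α : ℝ)
    (hα : 0 < α)
    (ha : ∀ w : E, ⟪w, u⟫ = 0 → ∑ i ∈ Finset.range n, η * ⟪w, z i⟫ ^ 2 ≤ α * ‖w‖ ^ 2)
    (s m : ℕ) (hsm : s ≤ m) (hm : m ≤ n) :
    ‖ojaP u (v m - v s)‖ ^ 2 ≤ α * ∑ i ∈ Finset.Ico s m, η * ⟪z i, v i⟫ ^ 2 := by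
  set w := ojaP u (v m - v s) with hw
  set X := ∑ i ∈ Finset.Ico s m, η * ⟪z i, v i⟫ ^ 2 with hX
  have hX0 : 0 ≤ X := Finset.sum_nonneg fun i _ => by positivity
  have h1 : ‖w‖ ^ 2 = ∑ i ∈ Finset.Ico s m, η * ⟪z i, v i⟫ * ⟪w, z i⟫ := by
    rw [← oja_tele z v η n hv w s m hsm hm, hw, ojaP_inner u _ hu]
  have h2 : ∑ i ∈ Finset.Ico s m, η * ⟪w, z i⟫ ^ 2 ≤ α * ‖w‖ ^ 2 := by
    refine le_trans (Finset.sum_le_sum_of_subset_of_nonneg ?_ fun i _ _ => by positivity)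
      (ha w (ojaP_orth u _ hu))
    intro i hi
    simp at hi ⊢; omega
  have h3 : (‖w‖ ^ 2) ^ 2 ≤ X * ∑ i ∈ Finset.Ico s m, η * ⟪w, z i⟫ ^ 2 := by
    rw [h1]
    apply Finset.sum_sq_le_sum_mul_sum_of_sq_le_mul
    · intro i _; positivity
    · intro i _; positivity
    · intro i _; apply le_of_eq; ring
  have h4 := mul_le_mul_of_nonneg_left h2 hX0
  rcases eq_or_lt_of_le (sq_nonneg ‖w‖) with h | h
  · rw [← h]; positivity
  · have : ‖w‖ ^ 2 * ‖w‖ ^ 2 ≤ (α * X) * ‖w‖ ^ 2 := by nlinarith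
    exact le_of_mul_le_mul_right this h

theorem oja_step (z v : ℕ → E) (η : ℝ) (n : ℕ)
    (hv : ∀ i, i < n → v (i+1) = v i + (η * ⟪z i, v i⟫) • z i) (i : ℕ) (hi : i < n) :
    ‖v (i+1)‖ ^ 2 = ‖v i‖ ^ 2 + 2 * (η * ⟪z i, v i⟫ ^ 2) + (η * ⟪z i, v i⟫) ^ 2 * ‖z i‖ ^ 2 := by
  rw [hv i hi, norm_add_sq_real, inner_smul_right, norm_smul, mul_pow, Real.norm_eq_abs, sq_abs,
    real_inner_comm]
  ring

theorem oja_main (z v : ℕ → E) (η : ℝ) (hη : 0 < η) (n : ℕ)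
    (hv : ∀ i, i < n → v (i+1) = v i + (η * ⟪z i, v i⟫) • z i) (u : E) (hu : ‖u‖ = 1) (α : ℝ)
    (hα : 0 < α)
    (ha : ∀ w : E, ⟪w, u⟫ = 0 → ∑ i ∈ Finset.range n, η * ⟪w, z i⟫ ^ 2 ≤ α * ‖w‖ ^ 2)
    (hpos : ∀ i, i ≤ n → 0 < ‖v i‖)
    (hmono : ∀ i j, i ≤ j → j ≤ n → ‖v i‖ ≤ ‖v j‖) (k : ℕ) :
    ∀ s, s + 2 ^ k ≤ n →
    ∑ i ∈ Finset.Ico s (s + 2 ^ k), η * ⟪ojaP u (v i - v s), z i⟫ ^ 2 / ‖v i‖ ^ 2 ≤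
      α ^ 2 * (k + 1) ^ 2 * ∑ i ∈ Finset.Ico s (s + 2 ^ k), η * ⟪z i, v i⟫ ^ 2 / ‖v i‖ ^ 2 := by
  induction k with
  | zero =>
    intro s hs
    simp [ojaP]; positivity
  | succ k ih =>
    intro s hs
    have e : s + 2 ^ (k+1) = (s + 2 ^ k) + 2 ^ k := by ring
    rw [e] at hs ⊢
    set m := s + 2 ^ k with hm
    have hp2 : 0 < 2 ^ k := by positivity
    have hsm : s ≤ m := by omega
    have hmt : m ≤ m + 2 ^ k := by omega
    have hmn : m ≤ n := by omega
    rw [← Finset.sum_Ico_consecutive _ hsm hmt, ← Finset.sum_Ico_consecutive _ hsm hmt]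
    have hL := ih s (by omega)
    have hR := ih m hs
    rw [← hm] at hL
    set XL := ∑ i ∈ Finset.Ico s m, η * ⟪z i, v i⟫ ^ 2 / ‖v i‖ ^ 2
    set XR := ∑ i ∈ Finset.Ico m (m + 2 ^ k), η * ⟪z i, v i⟫ ^ 2 / ‖v i‖ ^ 2
    set A := ∑ i ∈ Finset.Ico m (m + 2 ^ k), η * ⟪ojaP u (v i - v m), z i⟫ ^ 2 / ‖v i‖ ^ 2
    set w := ojaP u (v m - v s) with hw
    have hXL : 0 ≤ XL := Finset.sum_nonneg fun i _ => by positivity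
    have hXR : 0 ≤ XR := Finset.sum_nonneg fun i _ => by positivity
    have hNm := hpos m hmn
    have hwX : ‖w‖ ^ 2 ≤ α * (‖v m‖ ^ 2 * XL) := by
      refine (oja_left z v η hη n hv u hu α hα ha s m hsm hmn).trans ?_
      gcongr
      rw [Finset.mul_sum]
      refine Finset.sum_le_sum fun i hi => ?_
      simp at hi
      have h1 := hpos i (by omega)
      have h2 := hmono i m (by omega) hmn
      rw [← mul_div_assoc, le_div_iff₀ (by positivity), mul_comm]
      gcongr
    have hB : ∑ i ∈ Finset.Ico m (m + 2 ^ k), η * ⟪w, z i⟫ ^ 2 / ‖v i‖ ^ 2 ≤ α ^ 2 * XL := by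
      have h1 : ∑ i ∈ Finset.Ico m (m + 2 ^ k), η * ⟪w, z i⟫ ^ 2 / ‖v i‖ ^ 2 ≤
          (∑ i ∈ Finset.Ico m (m + 2 ^ k), η * ⟪w, z i⟫ ^ 2) / ‖v m‖ ^ 2 := by
        rw [Finset.sum_div]
        refine Finset.sum_le_sum fun i hi => ?_
        simp at hi
        have h2 := hmono m i (by omega) (by omega)
        gcongr
      have h2 : ∑ i ∈ Finset.Ico m (m + 2 ^ k), η * ⟪w, z i⟫ ^ 2 ≤ α * ‖w‖ ^ 2 := by
        refine le_trans (Finset.sum_le_sum_of_subset_of_nonneg ?_ fun i _ _ => by positivity)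
          (ha w (ojaP_orth u _ hu))
        intro i hi
        simp at hi ⊢; omega
      refine h1.trans ?_
      rw [div_le_iff₀ (by positivity)]
      nlinarith
    have hC : ∑ i ∈ Finset.Ico m (m + 2 ^ k), η * ⟪ojaP u (v i - v s), z i⟫ ^ 2 / ‖v i‖ ^ 2 ≤
        (1 + 1 / ((k:ℝ) + 1)) * A + (k + 2) *
          ∑ i ∈ Finset.Ico m (m + 2 ^ k), η * ⟪w, z i⟫ ^ 2 / ‖v i‖ ^ 2 := by
      rw [Finset.mul_sum, Finset.mul_sum, ← Finset.sum_add_distrib]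
      refine Finset.sum_le_sum fun i hi => ?_
      have : ojaP u (v i - v s) = ojaP u (v i - v m) + w := by
        rw [hw]; simp only [ojaP_sub]; abel
      rw [this, inner_add_left]
      generalize ⟪ojaP u (v i - v m), z i⟫ = a
      generalize ⟪w, z i⟫ = b
      have key : (a + b) ^ 2 ≤ (1 + 1 / ((k:ℝ) + 1)) * a ^ 2 + (k + 2) * b ^ 2 := by
        have : (1 + 1 / ((k:ℝ) + 1)) * a ^ 2 + (k + 2) * b ^ 2 - (a + b) ^ 2 =
          (a - (k+1) * b) ^ 2 / (k + 1) := by field_simp; ring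
        have h3 : 0 ≤ (a - (k+1) * b) ^ 2 / ((k:ℝ) + 1) := by positivity
        linarith
      calc η * (a + b) ^ 2 / ‖v i‖ ^ 2
          ≤ η * ((1 + 1 / ((k:ℝ) + 1)) * a ^ 2 + (k + 2) * b ^ 2) / ‖v i‖ ^ 2 := by gcongr
        _ = _ := by ring
    have hA2 : (1 + 1 / ((k:ℝ) + 1)) * A ≤ α ^ 2 * ((k + 1) * (k + 2)) * XR := by
      calc _ ≤ (1 + 1 / ((k:ℝ) + 1)) * (α ^ 2 * (k + 1) ^ 2 * XR) := by gcongr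
        _ = _ := by field_simp; ring
    have hB2 := mul_le_mul_of_nonneg_left hB (by positivity : (0:ℝ) ≤ (k:ℝ) + 2)
    push_cast
    have p1 : 0 ≤ α ^ 2 * XL * (k + 1) := by positivity
    have p2 : 0 ≤ α ^ 2 * XR * (k + 2) := by positivity
    nlinarith

end aux

set_option maxHeartbeats 2000000 in
theorem stmt_14 {n d L : ℕ} (hd : 1 ≤ d) (hL : 1 ≤ L) (hn : n = 2 ^ L)
    (C₁ : ℝ) (hC₁ : 200 ≤ C₁)
    (y : ℕ → EuclideanSpace ℝ (Fin d)) (η : ℝ) (hη : 0 < η)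
    (hη' : η ≤ 0.1 / ((Finset.Icc 1 n).sup'
      (Finset.nonempty_Icc.mpr (by rw [hn]; exact Nat.one_le_two_pow : 1 ≤ n))
      fun i => ‖y i‖ ^ 2))
    (vstar : EuclideanSpace ℝ (Fin d)) (hvstar : ‖vstar‖ = 1)
    (α β : ℝ) (hα : α ∈ Set.Ioo (0 : ℝ) 0.1) (hαβ : α ≤ β)
    (hbeta : η * ∑ i ∈ Finset.Icc 1 n, ⟪vstar, y i⟫ ^ 2 = β)
    (halpha : ∀ w : EuclideanSpace ℝ (Fin d), ‖w‖ ≤ 1 → ⟪w, vstar⟫ = 0 →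
      η * ∑ i ∈ Finset.Icc 1 n, ⟪w, y i⟫ ^ 2 ≤ α)
    (v : ℕ → EuclideanSpace ℝ (Fin d)) (hv0 : v 0 = vstar)
    (hv : ∀ i, 1 ≤ i → i ≤ n → v i = v (i - 1) + (η * ⟪y i, v (i - 1)⟫) • y i) :
    (β / 8) / (1 + C₁ * α ^ 2 * (L : ℝ) ^ 2) ≤ Real.log ‖v n‖ ∧
      (α < 1 / (10 * C₁ * (L : ℝ)) → Real.exp (β / 20) ≤ ‖v n‖) := by
  obtain ⟨hα0, hα1⟩ := hα
  have hyb : ∀ i, 1 ≤ i → i ≤ n → η * ‖y i‖ ^ 2 ≤ 0.1 := by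
    intro i h1 h2
    have hle := Finset.le_sup' (fun i => ‖y i‖ ^ 2) (Finset.mem_Icc.mpr ⟨h1, h2⟩)
    set M := (Finset.Icc 1 n).sup'
      (Finset.nonempty_Icc.mpr (by rw [hn]; exact Nat.one_le_two_pow : 1 ≤ n))
      fun i => ‖y i‖ ^ 2
    have hM0 : 0 ≤ M := le_trans (sq_nonneg ‖y i‖) hle
    rcases eq_or_lt_of_le hM0 with h | h
    · rw [← h] at hη'; simp at hη'; linarith
    · rw [le_div_iff₀ h] at hη'
      exact (mul_le_mul_of_nonneg_left hle hη.le).trans hη'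
  have hsum : ∀ f : ℕ → ℝ, ∑ i ∈ Finset.Icc 1 n, f i = ∑ i ∈ Finset.range n, f (i + 1) := by
    intro f
    rw [Finset.range_eq_Ico, Finset.sum_Ico_add' f 0 n 1]
    rfl
  obtain ⟨z, hz⟩ : ∃ z : ℕ → EuclideanSpace ℝ (Fin d), ∀ i, z i = y (i + 1) := ⟨_, fun _ => rfl⟩
  have hzb : ∀ i, i < n → η * ‖z i‖ ^ 2 ≤ 0.1 := fun i hi => by
    rw [hz]; exact hyb _ (by omega) (by omega)
  have hv' : ∀ i, i < n → v (i+1) = v i + (η * ⟪z i, v i⟫) • z i := fun i hi => by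
    have := hv (i+1) (by omega) (by omega)
    simpa [hz] using this
  have hbeta' : ∑ i ∈ Finset.range n, η * ⟪vstar, z i⟫ ^ 2 = β := by
    rw [← hbeta, hsum, Finset.mul_sum]; simp [hz]
  have ha : ∀ w : EuclideanSpace ℝ (Fin d), ⟪w, vstar⟫ = 0 →
      ∑ i ∈ Finset.range n, η * ⟪w, z i⟫ ^ 2 ≤ α * ‖w‖ ^ 2 := by
    intro w hw
    rcases eq_or_ne w 0 with rfl | h0
    · simp
    have hw0 : 0 < ‖w‖ := norm_pos_iff.mpr h0
    have := halpha (‖w‖⁻¹ • w) (by simp [norm_smul, hw0.ne']) (by simp [inner_smul_left, hw])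
    rw [hsum, Finset.mul_sum] at this
    simp only [← hz, inner_smul_left] at this
    have e : ∑ i ∈ Finset.range n, η * ⟪w, z i⟫ ^ 2 =
      (∑ i ∈ Finset.range n, η * ((starRingEnd ℝ) ‖w‖⁻¹ * ⟪w, z i⟫) ^ 2) * ‖w‖ ^ 2 := by
      rw [Finset.sum_mul]
      refine Finset.sum_congr rfl fun i _ => ?_
      simp; field_simp
    rw [e]; gcongr
  have hstep := oja_step z v η n hv'
  have hmono1 : ∀ i, i < n → ‖v i‖ ≤ ‖v (i+1)‖ := fun i hi => by
    apply le_of_sq_le_sq _ (norm_nonneg _)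
    rw [hstep i hi]
    have : 0 ≤ 2 * (η * ⟪z i, v i⟫ ^ 2) + (η * ⟪z i, v i⟫) ^ 2 * ‖z i‖ ^ 2 := by positivity
    linarith
  have hmono : ∀ i j, i ≤ j → j ≤ n → ‖v i‖ ≤ ‖v j‖ := by
    intro i j hij
    induction j, hij using Nat.le_induction with
    | base => intro _; exact le_rfl
    | succ j h ih => intro hj; exact (ih (by omega)).trans (hmono1 j (by omega))
  have hone : ∀ i, i ≤ n → 1 ≤ ‖v i‖ := fun i hi => by
    have := hmono 0 i (by omega) hi
    rwa [hv0, hvstar] at this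
  have hpos : ∀ i, i ≤ n → 0 < ‖v i‖ := fun i hi => by linarith [hone i hi]
  obtain ⟨S, hS⟩ : ∃ S, S = ∑ i ∈ Finset.range n, η * ⟪z i, v i⟫ ^ 2 / ‖v i‖ ^ 2 := ⟨_, rfl⟩
  have hS0 : 0 ≤ S := by rw [hS]; exact Finset.sum_nonneg fun i _ => by positivity
  -- projection is small
  have hsq : ∀ m, m ≤ n → 1 + 2 * ∑ i ∈ Finset.Ico 0 m, η * ⟪z i, v i⟫ ^ 2 ≤ ‖v m‖ ^ 2 := by
    intro m
    induction m with
    | zero => intro _; simp [hv0, hvstar]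
    | succ m ih =>
      intro hm
      rw [Finset.sum_Ico_succ_top (by omega), hstep m (by omega)]
      have := ih (by omega)
      have : 0 ≤ (η * ⟪z m, v m⟫) ^ 2 * ‖z m‖ ^ 2 := by positivity
      linarith
  have hP0 : ∀ m, ojaP vstar (v m - v 0) = v m - ⟪vstar, v m⟫ • vstar := by
    intro m
    rw [ojaP_sub, hv0]; simp [ojaP, hvstar]
  have hdec : ∀ m, ‖v m‖ ^ 2 = ⟪vstar, v m⟫ ^ 2 + ‖ojaP vstar (v m - v 0)‖ ^ 2 := by
    intro m
    rw [hP0, norm_sub_sq_real, inner_smul_right, norm_smul, hvstar, real_inner_comm,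
      Real.norm_eq_abs, mul_one, sq_abs]; ring
  have ha2 : ∀ m, m ≤ n → 0.95 * ‖v m‖ ^ 2 ≤ ⟪vstar, v m⟫ ^ 2 := by
    intro m hm
    have h1 := oja_left z v η hη n hv' vstar hvstar α hα0 ha 0 m (by omega) hm
    have h2 := hsq m hm
    have h3 := hdec m
    have : α * ∑ i ∈ Finset.Ico 0 m, η * ⟪z i, v i⟫ ^ 2 ≤
        0.1 * ∑ i ∈ Finset.Ico 0 m, η * ⟪z i, v i⟫ ^ 2 :=
      mul_le_mul_of_nonneg_right hα1.le (Finset.sum_nonneg fun i _ => by positivity)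
    nlinarith
  have hT := oja_main z v η hη n hv' vstar hvstar α hα0 ha hpos hmono L 0 (by omega)
  rw [zero_add, ← hn, ← Finset.range_eq_Ico, ← hS] at hT
  have hβS : 0.95 * β ≤ 2 * S + 2 * (α ^ 2 * (L + 1) ^ 2 * S) := by
    refine le_trans ?_ (add_le_add_right (mul_le_mul_of_nonneg_left hT zero_le_two) _)
    rw [← hbeta', hS, Finset.mul_sum, Finset.mul_sum, Finset.mul_sum, ← Finset.sum_add_distrib]
    refine Finset.sum_le_sum fun i hi => ?_
    have hin : i ≤ n := by simp at hi; omega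
    have h1 := hpos i hin
    have h2 := ha2 i hin
    have e : ⟪z i, v i⟫ = ⟪vstar, v i⟫ * ⟪vstar, z i⟫ + ⟪ojaP vstar (v i - v 0), z i⟫ := by
      rw [hP0, inner_sub_left, inner_smul_left, real_inner_comm]; simp
    rw [e]
    generalize ⟪ojaP vstar (v i - v 0), z i⟫ = b
    generalize ⟪vstar, z i⟫ = c at *
    generalize ⟪vstar, v i⟫ = a at *
    have h3 : 0.95 * ‖v i‖ ^ 2 * c ^ 2 ≤ 2 * (a * c + b) ^ 2 + 2 * b ^ 2 := by
      have := mul_le_mul_of_nonneg_right h2 (sq_nonneg c)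
      nlinarith [sq_nonneg (a * c + 2 * b)]
    have h4 := mul_le_mul_of_nonneg_left h3 hη.le
    calc 0.95 * (η * c ^ 2) = η * (0.95 * ‖v i‖ ^ 2 * c ^ 2) / ‖v i‖ ^ 2 := by field_simp
      _ ≤ η * (2 * (a * c + b) ^ 2 + 2 * b ^ 2) / ‖v i‖ ^ 2 := by gcongr
      _ = _ := by ring
  have hlog : ∀ m, m ≤ n → (∑ i ∈ Finset.range m, η * ⟪z i, v i⟫ ^ 2 / ‖v i‖ ^ 2) / 1.2 ≤
      Real.log ‖v m‖ := by
    intro m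
    induction m with
    | zero => intro _; simp [hv0, hvstar]
    | succ m ih =>
      intro hm
      have hi := ih (by omega)
      have hp := hpos m (by omega)
      have hp' := hpos (m+1) hm
      rw [Finset.sum_range_succ]
      obtain ⟨t, ht⟩ : ∃ t, t = η * ⟪z m, v m⟫ ^ 2 / ‖v m‖ ^ 2 := ⟨_, rfl⟩
      have ht0 : 0 ≤ t := by rw [ht]; positivity
      have ht1 : t ≤ 0.1 := by
        refine le_trans ?_ (hzb m (by omega))
        rw [ht, div_le_iff₀ (by positivity), mul_assoc]
        gcongr
        rw [← mul_pow, sq_le_sq, abs_of_nonneg (by positivity : 0 ≤ ‖z m‖ * ‖v m‖)]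
        exact abs_real_inner_le_norm _ _
      rw [← ht]
      have h1 : ‖v m‖ ^ 2 * (1 + 2 * t) ≤ ‖v (m+1)‖ ^ 2 := by
        rw [hstep m (by omega)]
        have : ‖v m‖ ^ 2 * t = η * ⟪z m, v m⟫ ^ 2 := by rw [ht]; field_simp
        have : 0 ≤ (η * ⟪z m, v m⟫) ^ 2 * ‖z m‖ ^ 2 := by positivity
        nlinarith
      have h2 := Real.log_le_log (by positivity) h1
      rw [Real.log_mul (by positivity) (by positivity), Real.log_pow, Real.log_pow] at h2
      have h3 := Real.one_sub_inv_le_log_of_pos (by positivity : 0 < 1 + 2 * t)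
      have h4 : 2 * t / 1.2 ≤ 1 - (1 + 2 * t)⁻¹ := by
        have : 1 - (1 + 2 * t)⁻¹ = 2 * t / (1 + 2 * t) := by field_simp; ring
        rw [this]
        gcongr; linarith
      push_cast at h2
      have : (∑ i ∈ Finset.range m, η * ⟪z i, v i⟫ ^ 2 / ‖v i‖ ^ 2 + t) / 1.2 =
        (∑ i ∈ Finset.range m, η * ⟪z i, v i⟫ ^ 2 / ‖v i‖ ^ 2) / 1.2 + (2 * t / 1.2) / 2 := by ring
      rw [this]
      linarith
  have hG := hlog n le_rfl
  rw [← hS] at hG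
  have hL1 : (1:ℝ) ≤ L := by exact_mod_cast hL
  have hβ0 : 0 < β := by linarith
  have hq : α ^ 2 * ((L:ℝ) + 1) ^ 2 ≤ C₁ * α ^ 2 * (L:ℝ) ^ 2 := by
    have : ((L:ℝ) + 1) ^ 2 ≤ C₁ * (L:ℝ) ^ 2 := by nlinarith
    nlinarith [mul_le_mul_of_nonneg_left this (sq_nonneg α)]
  obtain ⟨Q, hQ⟩ : ∃ Q, Q = C₁ * α ^ 2 * (L:ℝ) ^ 2 := ⟨_, rfl⟩
  have hQ0 : 0 ≤ Q := by rw [hQ]; positivity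
  rw [← hQ] at hq ⊢
  have main : (β / 8) / (1 + Q) ≤ Real.log ‖v n‖ := by
    refine le_trans ?_ hG
    rw [div_le_iff₀ (by positivity)]
    have := mul_le_mul_of_nonneg_right hq hS0
    have e : S / 1.2 * (1 + Q) = (S + Q * S) / 1.2 := by ring
    rw [e, le_div_iff₀ (by norm_num)]
    linarith
  refine ⟨main, fun hsm => ?_⟩
  rw [← Real.le_log_iff_exp_le (hpos n le_rfl)]
  refine le_trans ?_ main
  have hx : α * (10 * C₁ * L) < 1 := by rwa [lt_div_iff₀ (by positivity)] at hsm
  have hx0 : 0 < C₁ * α * L := by positivity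
  have hx2 : α * L ≤ 1 := by nlinarith [mul_pos hα0 (by linarith : (0:ℝ) < L)]
  have hQ1 : Q ≤ 1 := by
    have : Q = (C₁ * α * L) * (α * L) := by rw [hQ]; ring
    rw [this]; nlinarith
  rw [le_div_iff₀ (by positivity)]
  nlinarith
end
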